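/- Let C be the Cartan matrix of type E6, E7, or E8, with index set I. Then the ℤ-linear map from the group of finitely supported functions I × ℤ → ℤ to itself sending a family v = (v_{i,k}) to Σ_{(i,k)} v_{i,k} · A_{i,k} is injective. In particular, for monomials m ≤ m' the exponents v_{i,k}(m, m') with m' − m = Σ v_{i,k}(m,m') A_{i,k} are uniquely determined. -/

import Mathlib

open Matrix Finsupp

def cartanE6 : Matrix (Fin 6) (Fin 6) ℤ :=
  !![ 2, -1,  0,  0,  0,  0;
     -1,  2, -1,  0,  0,  0;
      0, -1,  2, -1,  0, -1;
      0,  0, -1,  2, -1,  0;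
      0,  0,  0, -1,  2,  0;
      0,  0, -1,  0,  0,  2]

def cartanE7 : Matrix (Fin 7) (Fin 7) ℤ :=
  !![ 2, -1,  0,  0,  0,  0,  0;
     -1,  2, -1,  0,  0,  0,  0;
      0, -1,  2, -1,  0,  0, -1;
      0,  0, -1,  2, -1,  0,  0;
      0,  0,  0, -1,  2, -1,  0;
      0,  0,  0,  0, -1,  2,  0;
      0,  0, -1,  0,  0,  0,  2]

def cartanE8 : Matrix (Fin 8) (Fin 8) ℤ :=
  !![ 2, -1,  0,  0,  0,  0,  0,  0;
     -1,  2, -1,  0,  0,  0,  0,  0;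
      0, -1,  2, -1,  0,  0,  0,  0;
      0,  0, -1,  2, -1,  0,  0,  0;
      0,  0,  0, -1,  2, -1,  0, -1;
      0,  0,  0,  0, -1,  2, -1,  0;
      0,  0,  0,  0,  0, -1,  2,  0;
      0,  0,  0,  0, -1,  0,  0,  2]

/-- The element `A_{i,k} = e_{i,k+1} + e_{i,k-1} + ∑_{j ≠ i} C_{ij} e_{j,k}` of the free
abelian group of finitely supported functions `I × ℤ → ℤ`, the additive counterpart of the
monomial `A_{i,q^k}`. -/
noncomputable def Amon {n : ℕ} (C : Matrix (Fin n) (Fin n) ℤ) (p : Fin n × ℤ) : (Fin n × ℤ) →₀ ℤ :=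
  Finsupp.single (p.1, p.2 + 1) 1 + Finsupp.single (p.1, p.2 - 1) 1 +
    ∑ j ∈ Finset.univ.erase p.1, C p.1 j • Finsupp.single (j, p.2) (1 : ℤ)

/-- The ℤ-linear map `v ↦ ∑_{(i,k)} v_{i,k} • A_{i,k}`. -/
noncomputable def AmonSum {n : ℕ} (C : Matrix (Fin n) (Fin n) ℤ) (v : (Fin n × ℤ) →₀ ℤ) :
    (Fin n × ℤ) →₀ ℤ :=
  v.sum fun p c => c • Amon C p

theorem Amon_apply_top {n : ℕ} (C : Matrix (Fin n) (Fin n) ℤ) (p : Fin n × ℤ) (i : Fin n)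
    (k : ℤ) (h : p.2 ≤ k) : Amon C p (i, k + 1) = if p = (i, k) then 1 else 0 := by
  obtain ⟨j, l⟩ := p
  simp only at h
  have h2 : ¬ (l - 1 = k + 1) := by omega
  have h3 : ¬ (l = k + 1) := by omega
  simp [Amon, Finsupp.single_apply, Finsupp.finset_sum_apply, h2, h3]

theorem AmonSum_sub' {n : ℕ} (C : Matrix (Fin n) (Fin n) ℤ) (v w : (Fin n × ℤ) →₀ ℤ) :
    AmonSum C (v - w) = AmonSum C v - AmonSum C w := by
  unfold AmonSum
  exact Finsupp.sum_sub_index (fun p a b => sub_smul a b _)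

theorem AmonSum_injective_all {n : ℕ} (C : Matrix (Fin n) (Fin n) ℤ) :
    Function.Injective (AmonSum C) := by
  intro v w hvw
  by_contra hne
  have hd : v - w ≠ 0 := sub_ne_zero.mpr hne
  have h0 : AmonSum C (v - w) = 0 := by rw [AmonSum_sub', hvw, sub_self]
  generalize v - w = d at hd h0
  obtain ⟨⟨i, k⟩, hp, hmax⟩ := d.support.exists_max_image (fun p => p.2)
    (Finsupp.support_nonempty_iff.mpr hd)
  have h1 : AmonSum C d (i, k + 1) = d (i, k) := by
    unfold AmonSum
    rw [Finsupp.sum_apply, Finsupp.sum, Finset.sum_eq_single (i, k)]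
    · simp [Amon_apply_top C (i, k) i k le_rfl]
    · intro p hp' hpne
      simp [Amon_apply_top C p i k (hmax p hp'), hpne]
    · intro h
      exact absurd hp h
  rw [h0] at h1
  exact (Finsupp.mem_support_iff.mp hp) h1.symm

/-- For the Cartan matrices of types E6, E7, E8, the map
`v ↦ ∑_{(i,k)} v_{i,k} • A_{i,k}` is injective; in particular the exponents
`v_{i,k}(m, m')` for monomials `m ≤ m'` are uniquely determined. -/
theorem AmonSum_injective_E :
    Function.Injective (AmonSum cartanE6) ∧
    Function.Injective (AmonSum cartanE7) ∧
    Function.Injective (AmonSum cartanE8) := by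
  exact ⟨AmonSum_injective_all _, AmonSum_injective_all _, AmonSum_injective_all _⟩
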